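/- The union ⊎_{i=1}^n R(G_i) of the rewrite systems of n pairwise symbol-disjoint sets of group axioms is convergent modulo A: the rewrite relation (⊎_{i=1}^n R(G_i))/A on associatively flat terms is confluent and terminating. -/

import Mathlib

/-!
Termination: the weight `wt` interprets associative symbols by addition and all
others by `2 + ∑ xᵢ²`. It is unchanged by associativity steps (`wt_AEq`) and drops
with every rule in every context (`wt_RGrules`, `wt_Ctx_lt`), because squaring is
strictly superadditive on numbers `≥ 2`.

Confluence: critical pairs are avoided by an explicit normal form `nf` with two
properties.

* `nf` is invariant under associativity steps and rewrite steps (`nf_RewA`).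
* Every term reduces to its `nf` modulo `A` (`red_nf`).

Two reducts `b`, `c` of `a` then have the same normal form, and both reduce to it.

The normal form is computed bottom-up. At a symbol of the `l`-th group, a term is
evaluated in the free group generated by its maximal subterms that are foreign to
that group (`toG`), and the reduced word of the result is read back as a term
(`fromG`, `normG`). Reading back and evaluating again gives the same group element
(`toG_normG`), so associativity and the group rules hold for normal forms because
they hold in a free group; for the rules that return a variable one also needs that
normal forms are fixed by every `normG` (`Good.normG_eq`, `good_nf`), disjointness
of the groups entering through `op_group`. The reduction of a term to its normal
form follows the cancellation steps of words in the free group (`red_build_cancel`)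
and the computation of inverse words (`red_build_inv`). Associative symbols outside
the groups are treated the same way, with strings in place of group words (`toL`,
`normL`). Flatness is never needed: an associative symbol with fewer than two
arguments behaves like a free symbol.
-/

/- ----------------------------------------------------------------------
  A formalization of the framework of "Congruence Closure Modulo Groups":
  variadic terms over a signature with associative symbols, rewriting
  modulo the (variadic) associativity axioms A, the rewrite system R(G)
  for the group axioms, ground flat equations, the completion inference
  system 𝓘, derivations, fairness, critical pairs modulo A, congruence
  closure modulo a set of axioms, and the Phase I / Phase II
  transformations producing S(E).
---------------------------------------------------------------------- -/

namespace CCModG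

/-- Variadic first-order terms: variables (indexed by ℕ), constants from `γ`,
and applications of function symbols from `F` to lists of terms. -/
inductive Tm (F : Type) (γ : Type) : Type
  | var : ℕ → Tm F γ
  | cst : γ → Tm F γ
  | app : F → List (Tm F γ) → Tm F γ

/-- Equations are (ordered representations of unordered) pairs of terms. -/
abbrev Eqn (F γ : Type) := Tm F γ × Tm F γ

variable {F γ C₀ : Type}

/-- Application of a substitution. -/
def Tm.subst (σ : ℕ → Tm F γ) : Tm F γ → Tm F γ
  | .var n => σ n
  | .cst c => .cst c
  | .app f ts => .app f (ts.attach.map (fun t => Tm.subst σ t.1))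
decreasing_by
  have := List.sizeOf_lt_of_mem t.2
  simp only [Tm.app.sizeOf_spec]
  omega

/-- Ground terms: terms containing no variables. -/
inductive Ground : Tm F γ → Prop
  | cst : ∀ c, Ground (.cst c)
  | app : ∀ (f : F) (ts : List (Tm F γ)), (∀ t ∈ ts, Ground t) → Ground (.app f ts)

/-- `headIs f t` holds iff `t` is headed by the function symbol `f`. -/
def headIs (f : F) (t : Tm F γ) : Prop := ∃ ts, t = Tm.app f ts

/-- Associatively flat terms (w.r.t. the set `SA` of associative symbols):
every subterm headed by an associative symbol `f` has at least two arguments,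
none of which is headed by `f` again. -/
inductive Flat (SA : Set F) : Tm F γ → Prop
  | var : ∀ n, Flat SA (.var n)
  | cst : ∀ c, Flat SA (.cst c)
  | app : ∀ (f : F) (ts : List (Tm F γ)), (∀ t ∈ ts, Flat SA t) →
      (f ∈ SA → 2 ≤ ts.length ∧ ∀ t ∈ ts, ¬ headIs f t) → Flat SA (.app f ts)

/-- The (variadic) associativity axiom scheme `A`:
`f(x₁,…,x_m, f(y₁,…,y_i), z₁,…,z_n) ≈ f(x₁,…,x_m, y₁,…,y_i, z₁,…,z_n)`
(stated for arbitrary argument terms, so it covers all instances). -/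
def ASax (SA : Set F) (s t : Tm F γ) : Prop :=
  ∃ (f : F) (us ws vs : List (Tm F γ)), f ∈ SA ∧ 2 ≤ ws.length ∧
    1 ≤ us.length + vs.length ∧
    s = .app f (us ++ (Tm.app f ws) :: vs) ∧ t = .app f (us ++ ws ++ vs)

/-- Closure of a relation under contexts (application at any position). -/
inductive Ctx (r : Tm F γ → Tm F γ → Prop) : Tm F γ → Tm F γ → Prop
  | base : ∀ {s t}, r s t → Ctx r s t
  | app : ∀ {s t} (f : F) (us vs : List (Tm F γ)), Ctx r s t →
      Ctx r (.app f (us ++ s :: vs)) (.app f (us ++ t :: vs))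

/-- Equality modulo associativity `A`: the reflexive–transitive–symmetric
closure of the associativity axioms applied at arbitrary positions. -/
def AEq (SA : Set F) : Tm F γ → Tm F γ → Prop :=
  Relation.ReflTransGen (fun s t => Ctx (ASax SA) s t ∨ Ctx (ASax SA) t s)

/-- One root rewrite step with a rule of `R` (applied to some instance). -/
def RuleStep (R : Set (Eqn F γ)) (s t : Tm F γ) : Prop :=
  ∃ l r σ, (l, r) ∈ R ∧ s = Tm.subst σ l ∧ t = Tm.subst σ r

/-- Plain rewriting with `R` (a rule applied at any position). -/
def Rew (R : Set (Eqn F γ)) : Tm F γ → Tm F γ → Prop := Ctx (RuleStep R)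

/-- Rewriting with `R` modulo associativity: `u →_{R/A} v` iff
`u ≈_A s →_R t ≈_A v` for some `s`, `t`. -/
def RewA (SA : Set F) (R : Set (Eqn F γ)) (s t : Tm F γ) : Prop :=
  ∃ s' t', AEq SA s s' ∧ Rew R s' t' ∧ AEq SA t' t

/-- A relation `r` is terminating on the terms satisfying `P`:
there is no infinite `r`-chain of such terms. -/
def TerminatingOn {α : Type*} (r : α → α → Prop) (P : α → Prop) : Prop :=
  ¬ ∃ g : ℕ → α, (∀ n, P (g n)) ∧ ∀ n, r (g n) (g (n + 1))

/-- `R/A` is confluent (modulo `A`) on the terms satisfying `P`. -/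
def ConfluentModAOn (SA : Set F) (R : Set (Eqn F γ)) (P : Tm F γ → Prop) : Prop :=
  ∀ a b c, P a → P b → P c →
    Relation.ReflTransGen (RewA SA R) a b → Relation.ReflTransGen (RewA SA R) a c →
    ∃ u v, Relation.ReflTransGen (RewA SA R) b u ∧
      Relation.ReflTransGen (RewA SA R) c v ∧ AEq SA u v

/-- The convergent rewrite system `R(G)` for the group axioms with the
associative symbol `fG`, the inverse symbol `iG` and the unit `one`:
`i(1)→1, f(x,1)→x, f(1,x)→x, i(i(x))→x, f(x,i(x))→1, f(i(x),x)→1,`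
`i(f(x,y))→f(i(y),i(x))`. -/
def RGrules (fG iG : F) (one : γ) : Set (Eqn F γ) :=
  {(.app iG [.cst one], .cst one),
   (.app fG [.var 0, .cst one], .var 0),
   (.app fG [.cst one, .var 0], .var 0),
   (.app iG [.app iG [.var 0]], .var 0),
   (.app fG [.var 0, .app iG [.var 0]], .cst one),
   (.app fG [.app iG [.var 0], .var 0], .cst one),
   (.app iG [.app fG [.var 0, .var 1]], .app fG [.app iG [.var 1], .app iG [.var 0]])}

/-- The rewrite system `R(M)` for the monoid axioms:
`f(x,1)→x` and `f(1,x)→x`. -/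
def RMrules (fG : F) (one : γ) : Set (Eqn F γ) :=
  {(.app fG [.var 0, .cst one], .var 0),
   (.app fG [.cst one, .var 0], .var 0)}

/-- Ground instances of a set of (possibly nonground) rules/equations. -/
def grInst (R : Set (Eqn F γ)) : Set (Eqn F γ) :=
  {e | ∃ l r σ, (l, r) ∈ R ∧ (∀ n, Ground (σ n)) ∧
        e = (Tm.subst σ l, Tm.subst σ r)}

/-- `gr(A)`: the ground instances of the associativity axioms. -/
def grA (SA : Set F) : Set (Eqn F γ) :=
  {e | ASax SA e.1 e.2 ∧ Ground e.1 ∧ Ground e.2}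

/-- One replacement step using a set of equations (in either direction,
at any position). -/
def EqStep (S : Set (Eqn F γ)) : Tm F γ → Tm F γ → Prop :=
  Ctx (fun a b => (a, b) ∈ S ∨ (b, a) ∈ S)

/-- `↔*_S`: the congruence (equational theory) generated by the set `S` of
(ground) equations: the reflexive–transitive closure of `EqStep S`. -/
def EqCl (S : Set (Eqn F γ)) : Tm F γ → Tm F γ → Prop :=
  Relation.ReflTransGen (EqStep S)

/-- Replacement of one occurrence of `u` by `v` (at any position). -/
def Repl (u v : Tm F γ) : Tm F γ → Tm F γ → Prop :=
  Ctx (fun a b => a = u ∧ b = v)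

/-- Terms all of whose constants come from the original set `C₀`
(the constant set is `C₀ ⊕ ℕ`, the new constants being the `Sum.inr` ones). -/
inductive InC0 : Tm F (C₀ ⊕ ℕ) → Prop
  | var : ∀ n, InC0 (.var n)
  | cst : ∀ c : C₀, InC0 (.cst (Sum.inl c))
  | app : ∀ (f : F) (ts : List (Tm F (C₀ ⊕ ℕ))), (∀ t ∈ ts, InC0 t) → InC0 (.app f ts)

/-- `fS f u` is the term `f(u)` whose argument string is `u`. -/
def fS (f : F) (u : List γ) : Tm F γ := .app f (u.map .cst)

/-- Ground flat equations (Definition 3.1): C-constant equations, D-flat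
equations, and A-flat equations. -/
def GFlatEq (SA : Set F) (e : Eqn F γ) : Prop :=
  (∃ c d : γ, e = (.cst c, .cst d)) ∨
  (∃ (g : F) (cs : List γ) (c : γ), 1 ≤ cs.length ∧ (g ∈ SA → 2 ≤ cs.length) ∧
      e = (fS g cs, .cst c)) ∨
  (∃ (f : F) (cs ds : List γ), f ∈ SA ∧ 2 ≤ cs.length ∧ 2 ≤ ds.length ∧
      e = (fS f cs, fS f ds))

/-- The total order `≻` on the constants `C = C₀ ⊕ ℕ` (Definition 3.5
(i)–(iii)): new constants are compared by index (`c_i ≻ c_j` iff `i < j`),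
every new constant is greater than every original constant, and original
constants are compared via the given precedence `prec`. -/
def cGT (prec : C₀ → ℕ) : (C₀ ⊕ ℕ) → (C₀ ⊕ ℕ) → Prop
  | Sum.inr i, Sum.inr j => i < j
  | Sum.inr _, Sum.inl _ => True
  | Sum.inl a, Sum.inl b => prec b < prec a
  | Sum.inl _, Sum.inr _ => False

/-- The length-lexicographic order on strings over `C` (longer strings are
greater; strings of equal length are compared lexicographically). -/
def strGT (prec : C₀ → ℕ) (u v : List (C₀ ⊕ ℕ)) : Prop :=
  v.length < u.length ∨
  (u.length = v.length ∧ List.Lex (fun a b => cGT prec b a) v u)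

/-- The order `≻` on ground flat terms (Definition 3.5). -/
inductive TGT (SA : Set F) (prec : C₀ → ℕ) : Tm F (C₀ ⊕ ℕ) → Tm F (C₀ ⊕ ℕ) → Prop
  | cc : ∀ {c d}, cGT prec c d → TGT SA prec (.cst c) (.cst d)
  | tc : ∀ (g : F) (ts : List (Tm F (C₀ ⊕ ℕ))) (c : C₀ ⊕ ℕ),
      TGT SA prec (.app g ts) (.cst c)
  | aa : ∀ {f u v}, f ∈ SA → strGT prec u v → TGT SA prec (fS f u) (fS f v)

/-- `IsStr f t w`: the term `t` is either a constant (with one-letter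
string `w`) or a term `f(w)` with argument string `w`. -/
def IsStr (f : F) (t : Tm F γ) (w : List γ) : Prop :=
  (∃ c, t = .cst c ∧ w = [c]) ∨ (2 ≤ w.length ∧ t = fS f w)

/-- `f̄(w)`: the term `f(w)` if `|w| ≥ 2`, and the constant itself if `w` is
a single letter. -/
def fbar (f : F) (w : List γ) : Tm F γ :=
  match w with
  | [c] => .cst c
  | w => .app f (w.map .cst)

/-- The inference system 𝓘 (Figure 1) on sets of ground flat equations, with
argument strings of associative symbols represented as lists over `C`. -/
inductive Infer (SA : Set F) (prec : C₀ → ℕ) :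
    Set (Eqn F (C₀ ⊕ ℕ)) → Set (Eqn F (C₀ ⊕ ℕ)) → Prop
  | deduce : ∀ {S : Set (Eqn F (C₀ ⊕ ℕ))} {f u1 u2 u3 s t ss ts},
      f ∈ SA → u1 ≠ [] → u2 ≠ [] → u3 ≠ [] →
      (fS f (u1 ++ u2), s) ∈ S → (fS f (u2 ++ u3), t) ∈ S →
      TGT SA prec (fS f (u1 ++ u2)) s → TGT SA prec (fS f (u2 ++ u3)) t →
      IsStr f s ss → IsStr f t ts →
      Infer SA prec S (insert (fS f (u1 ++ ts), fS f (ss ++ u3)) S)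
  | simplify : ∀ {S : Set (Eqn F (C₀ ⊕ ℕ))} {f u1 u2 u3 s t ts},
      f ∈ SA → 2 ≤ u2.length →
      (fS f (u1 ++ u2 ++ u3), s) ∈ S → (fS f u2, t) ∈ S →
      TGT SA prec (fS f u2) t → (u1 ++ u3 = [] → TGT SA prec s t) →
      IsStr f t ts →
      Infer SA prec S (insert (fbar f (u1 ++ ts ++ u3), s)
        (S \ {(fS f (u1 ++ u2 ++ u3), s)}))
  | collapse : ∀ {S : Set (Eqn F (C₀ ⊕ ℕ))} {s t u d s'},
      (s, t) ∈ S → (u, .cst d) ∈ S →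
      TGT SA prec s t → TGT SA prec u (.cst d) →
      (∀ f ts, u = .app f ts → f ∉ SA) →
      Repl u (.cst d) s s' →
      Infer SA prec S (insert (s', t) (S \ {(s, t)}))
  | compose : ∀ {S : Set (Eqn F (C₀ ⊕ ℕ))} {t c d},
      (t, .cst c) ∈ S → (.cst c, .cst d) ∈ S →
      TGT SA prec t (.cst c) → cGT prec c d →
      Infer SA prec S (insert (t, .cst d) (S \ {(t, .cst c)}))
  | delete : ∀ {S : Set (Eqn F (C₀ ⊕ ℕ))} {s},
      (s, s) ∈ S → Infer SA prec S (S \ {(s, s)})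

/-- A (possibly stuttering) derivation w.r.t. the inference system 𝓘. -/
def IsDeriv (SA : Set F) (prec : C₀ → ℕ) (D : ℕ → Set (Eqn F (C₀ ⊕ ℕ))) : Prop :=
  ∀ n, Infer SA prec (D n) (D (n + 1)) ∨ D (n + 1) = D n

/-- The set `S_∞ = ⋃_i ⋂_{j ≥ i} S_j` of persisting equations. -/
def Sinf {α : Type*} (D : ℕ → Set α) : Set α := {e | ∃ N, ∀ j, N ≤ j → e ∈ D j}

/-- Fairness of a derivation: every inference that is applicable to the
persisting equations (hence continuously enabled) is accounted for: all of
its conclusions appear somewhere in the derivation, and it removes no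
persisting equation. -/
def Fair (SA : Set F) (prec : C₀ → ℕ) (D : ℕ → Set (Eqn F (C₀ ⊕ ℕ))) : Prop :=
  ∀ S', Infer SA prec (Sinf D) S' → (S' ⊆ ⋃ k, D k) ∧ Sinf D ⊆ S'

/-- `S^≻`: the rewrite system obtained by orienting each equation of `S` by
the order `≻`. -/
def orient (SA : Set F) (prec : C₀ → ℕ) (S : Set (Eqn F (C₀ ⊕ ℕ))) :
    Set (Eqn F (C₀ ⊕ ℕ)) :=
  {e | TGT SA prec e.1 e.2 ∧ (e ∈ S ∨ (e.2, e.1) ∈ S)}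

/-- The critical pairs modulo associativity `CP_A(R)` (Definition 3.7). -/
def CPA (SA : Set F) (prec : C₀ → ℕ) (R : Set (Eqn F (C₀ ⊕ ℕ))) :
    Set (Eqn F (C₀ ⊕ ℕ)) :=
  {e | ∃ f u1 u2 u3 s t ss ts, f ∈ SA ∧ u1 ≠ [] ∧ u2 ≠ [] ∧ u3 ≠ [] ∧
      (fS f (u1 ++ u2), s) ∈ R ∧ (fS f (u2 ++ u3), t) ∈ R ∧
      IsStr f s ss ∧ IsStr f t ts ∧ e = (fS f (u1 ++ ts), fS f (ss ++ u3))} ∪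
  {e | ∃ f u1 u2 u3 s t ts, f ∈ SA ∧ 2 ≤ u2.length ∧
      (fS f (u1 ++ u2 ++ u3), s) ∈ R ∧ (fS f u2, t) ∈ R ∧
      (u1 ++ u3 = [] → TGT SA prec s t) ∧ IsStr f t ts ∧
      e = (fbar f (u1 ++ ts ++ u3), s)} ∪
  {e | ∃ s t u d s', (s, t) ∈ R ∧ (u, Tm.cst d) ∈ R ∧
      (∀ f ts, u = .app f ts → f ∉ SA) ∧ Repl u (.cst d) s s' ∧ e = (s', t)}

/-- Congruence closure `CC^F(E)` of a set `E` of ground equations over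
`T(Σ, C₀)` w.r.t. a set `Ax` of (possibly nonground) axioms: the smallest
relation containing `E`, containing every ground `C₀`-instance of the
axioms, and closed under reflexivity, symmetry, transitivity and
congruence. -/
inductive CCax (E Ax : Set (Eqn F (C₀ ⊕ ℕ))) :
    Tm F (C₀ ⊕ ℕ) → Tm F (C₀ ⊕ ℕ) → Prop
  | base : ∀ {s t}, (s, t) ∈ E → CCax E Ax s t
  | inst : ∀ {l r} (σ : ℕ → Tm F (C₀ ⊕ ℕ)), (l, r) ∈ Ax →
      (∀ n, Ground (σ n) ∧ InC0 (σ n)) → CCax E Ax (Tm.subst σ l) (Tm.subst σ r)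
  | refl : ∀ {s}, Ground s → InC0 s → CCax E Ax s s
  | symm : ∀ {s t}, CCax E Ax s t → CCax E Ax t s
  | trans : ∀ {s t u}, CCax E Ax s t → CCax E Ax t u → CCax E Ax s u
  | congr : ∀ {f : F} {ss ts : List (Tm F (C₀ ⊕ ℕ))},
      List.Forall₂ (CCax E Ax) ss ts → CCax E Ax (.app f ss) (.app f ts)

/-- The associativity axioms `A` as a set of equations. -/
def AaxS (SA : Set F) : Set (Eqn F γ) := {e | ASax SA e.1 e.2}

/-- The group axioms
`G = A ∪ {f(x,1)≈x, f(1,x)≈x, f(x,i(x))≈1, f(i(x),x)≈1}`. -/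
def GrpAxS (SA : Set F) (fG iG : F) (one : γ) : Set (Eqn F γ) :=
  AaxS SA ∪
  {(.app fG [.var 0, .cst one], .var 0), (.app fG [.cst one, .var 0], .var 0),
   (.app fG [.var 0, .app iG [.var 0]], .cst one),
   (.app fG [.app iG [.var 0], .var 0], .cst one)}

/-- The monoid axioms `M = A ∪ {f(x,1)≈x, f(1,x)≈x}`. -/
def MonAxS (SA : Set F) (fG : F) (one : γ) : Set (Eqn F γ) :=
  AaxS SA ∪
  {(.app fG [.var 0, .cst one], .var 0), (.app fG [.cst one, .var 0], .var 0)}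

/-- Evaluation of a term in an algebra with carrier `M`, interpretation `J`
of function symbols (variadic), interpretation `K` of constants, and
variable assignment `ρ`. -/
def evalTm {M : Type} (J : F → List M → M) (K : γ → M) (ρ : ℕ → M) : Tm F γ → M
  | .var n => ρ n
  | .cst c => K c
  | .app f ts => J f (ts.attach.map (fun t => evalTm J K ρ t.1))
decreasing_by
  have := List.sizeOf_lt_of_mem t.2
  simp only [Tm.app.sizeOf_spec]
  omega

/-- `s ≈_Ax t`: the equation `s ≈ t` holds in every model of the set `Ax` of
equations (so for `Ax = E ∪ G` this is the word problem relation `≈_E^G`). -/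
def SemEq (Ax : Set (Eqn F γ)) (s t : Tm F γ) : Prop :=
  ∀ (M : Type) (J : F → List M → M) (K : γ → M),
    (∀ e ∈ Ax, ∀ ρ : ℕ → M, evalTm J K ρ e.1 = evalTm J K ρ e.2) →
    ∀ ρ : ℕ → M, evalTm J K ρ s = evalTm J K ρ t

/-- `n` is a normal form of `s` w.r.t. `R/A`. -/
def IsNF (SA : Set F) (R : Set (Eqn F γ)) (s n : Tm F γ) : Prop :=
  Relation.ReflTransGen (RewA SA R) s n ∧ ∀ t, ¬ RewA SA R n t

/-- `s` and `t` have the same normal form w.r.t. `R/A` (normal forms are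
determined up to `≈_A`; flat terms represent their `A`-equivalence class). -/
def SameNF (SA : Set F) (R : Set (Eqn F γ)) (s t : Tm F γ) : Prop :=
  ∃ m n, IsNF SA R s m ∧ IsNF SA R t n ∧ AEq SA m n

/-- Proper subterms of associatively flat ground terms, including the
extension: `f(u)` is a proper subterm of `f(v u w)` for `f ∈ Σ_A`,
`|u| ≥ 2`, `|vw| ≠ 0`. -/
inductive PSubt (SA : Set F) : Tm F γ → Tm F γ → Prop
  | arg : ∀ {s : Tm F γ} {f : F} {ts : List (Tm F γ)}, s ∈ ts → PSubt SA s (.app f ts)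
  | sub : ∀ {s t : Tm F γ} {f : F} {ts : List (Tm F γ)},
      PSubt SA s t → t ∈ ts → PSubt SA s (.app f ts)
  | seg : ∀ {f : F} {us vs ws : List γ}, f ∈ SA → 2 ≤ us.length → vs ++ ws ≠ [] →
      PSubt SA (.app f (us.map .cst)) (.app f ((vs ++ us ++ ws).map .cst))

/-- `c` occurs as a constant in the term. -/
inductive CstIn (c : γ) : Tm F γ → Prop
  | cst : CstIn c (.cst c)
  | app : ∀ {t : Tm F γ} {f : F} {ts : List (Tm F γ)},
      CstIn c t → t ∈ ts → CstIn c (.app f ts)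

/- ------------------- Phase I ------------------- -/

/-- `t` is a constant. -/
def isCst (t : Tm F γ) : Prop := ∃ c, t = Tm.cst c

/-- Abstraction of a term: replace each immediate argument by (the constant
naming it under) `nm`. -/
def abst (nm : Tm F γ → γ) : Tm F γ → Tm F γ
  | .app g ts => .app g (ts.map (fun t => Tm.cst (nm t)))
  | t => t

/-- Reflexive argument-subterm relation (standard subterms). -/
inductive ArgSub : Tm F γ → Tm F γ → Prop
  | refl : ∀ t, ArgSub t t
  | arg : ∀ {s t : Tm F γ} {f : F} {ts : List (Tm F γ)},
      ArgSub s t → t ∈ ts → ArgSub s (.app f ts)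

/-- Proper (argument-)subterm. -/
def ProperArg (s t : Tm F γ) : Prop :=
  ∃ (f : F) (ts : List (Tm F γ)) (u : Tm F γ), t = Tm.app f ts ∧ u ∈ ts ∧ ArgSub s u

/-- `s'` is obtained from `s` by associative flattening followed by
`R/A`-normalization: `s →*_{R/A} u ≈_A s'` with `s'` flat and
`R/A`-irreducible. -/
def GNF (SA : Set F) (R : Set (Eqn F γ)) (s s' : Tm F γ) : Prop :=
  ∃ u, Relation.ReflTransGen (RewA SA R) s u ∧ AEq SA u s' ∧ Flat SA s' ∧
    ∀ v, ¬ RewA SA R s' v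

/-- Steps 1–2 of Phase I: associatively flatten and normalize both sides of
each equation of `E` by `R/A`, removing trivial equations. -/
def PhaseI12 (SA : Set F) (R E : Set (Eqn F γ)) : Set (Eqn F γ) :=
  {e | ∃ p ∈ E, GNF SA R p.1 e.1 ∧ GNF SA R p.2 e.2 ∧ e.1 ≠ e.2}

/-- Flattening of `E` for the semigroup case (Phase I without the
normalization step 2): only associative flattening of both sides. -/
def PhaseI1Sem (SA : Set F) (E : Set (Eqn F γ)) : Set (Eqn F γ) :=
  {e | ∃ p ∈ E, AEq SA p.1 e.1 ∧ Flat SA e.1 ∧ AEq SA p.2 e.2 ∧ Flat SA e.2}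

/-- An equation whose two sides are nonconstant and not both headed by the
same associative symbol must be split using a fresh constant in step 3. -/
def SplitCase (SA : Set F) (p : Eqn F γ) : Prop :=
  ∃ (g : F) (as_ : List (Tm F γ)) (h : F) (bs : List (Tm F γ)),
    p.1 = Tm.app g as_ ∧ p.2 = Tm.app h bs ∧ ¬(g = h ∧ g ∈ SA)

/-- The terms receiving fresh names in step 3 of Phase I: the nonconstant
proper subterms of `E₂`, together with one side of each equation that must
be split. -/
def NeedName (SA : Set F) (E₂ : Set (Eqn F γ)) : Set (Tm F γ) :=
  {t | ¬ isCst t ∧ ∃ p ∈ E₂, ProperArg t p.1 ∨ ProperArg t p.2} ∪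
  {t | ∃ p ∈ E₂, SplitCase SA p ∧ t = p.1}

/-- The defining equations introduced by flattening: `abst(t) ≈ nm(t)` for
each nonconstant proper subterm `t` of `E₂`. -/
def DefEqs (nm : Tm F γ → γ) (E₂ : Set (Eqn F γ)) : Set (Eqn F γ) :=
  {e | ∃ t, (¬ isCst t ∧ ∃ p ∈ E₂, ProperArg t p.1 ∨ ProperArg t p.2) ∧
        e = (abst nm t, .cst (nm t))}

/-- The flat equations replacing a top-level equation `p ∈ E₂`. -/
def TopOf (SA : Set F) (nm : Tm F γ → γ) (p e : Eqn F γ) : Prop :=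
  (isCst p.1 ∧ isCst p.2 ∧ e = p) ∨
  (∃ (f : F) (as_ bs : List (Tm F γ)), f ∈ SA ∧ p.1 = Tm.app f as_ ∧
      p.2 = Tm.app f bs ∧ e = (abst nm p.1, abst nm p.2)) ∨
  (∃ (g : F) (as_ : List (Tm F γ)) (c : γ), p.1 = Tm.app g as_ ∧ p.2 = Tm.cst c ∧
      e = (abst nm p.1, .cst c)) ∨
  (∃ (g : F) (as_ : List (Tm F γ)) (c : γ), p.2 = Tm.app g as_ ∧ p.1 = Tm.cst c ∧
      e = (abst nm p.2, .cst c)) ∨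
  (SplitCase SA p ∧ (e = (abst nm p.1, .cst (nm p.1)) ∨ e = (abst nm p.2, .cst (nm p.1))))

/-- All top-level equations produced from `E₂`. -/
def TopEqs (SA : Set F) (nm : Tm F γ → γ) (E₂ : Set (Eqn F γ)) : Set (Eqn F γ) :=
  {e | ∃ p ∈ E₂, TopOf SA nm p e}

/-- Step 3 of Phase I: `E'` is obtained from the flattened, normalized set
`E₂` by naming nonflat subterms with fresh constants from `C₁ ⊆ ℕ` via the
injective naming function `nm`, recording the defining equations. -/
def IsFlattening (SA : Set F) (E₂ : Set (Eqn F (C₀ ⊕ ℕ)))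
    (nm : Tm F (C₀ ⊕ ℕ) → (C₀ ⊕ ℕ)) (C1 : Set ℕ) (E' : Set (Eqn F (C₀ ⊕ ℕ))) : Prop :=
  (∀ c, nm (.cst c) = c) ∧
  (∀ t ∈ NeedName SA E₂, ∃ i ∈ C1, nm t = Sum.inr i) ∧
  (∀ s ∈ NeedName SA E₂, ∀ t ∈ NeedName SA E₂, nm s = nm t → s = t) ∧
  (∀ i ∈ C1, ∃ t ∈ NeedName SA E₂, nm t = Sum.inr i) ∧
  C1.Finite ∧
  E' = DefEqs nm E₂ ∪ TopEqs SA nm E₂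

/-- Phase I (with normalization by `Rn/A`): flatten, normalize, then flatten
into ground flat equations using fresh constants. -/
def IsPhaseI (SA : Set F) (Rn E : Set (Eqn F (C₀ ⊕ ℕ)))
    (nm : Tm F (C₀ ⊕ ℕ) → (C₀ ⊕ ℕ)) (C1 : Set ℕ) (E' : Set (Eqn F (C₀ ⊕ ℕ))) : Prop :=
  IsFlattening SA (PhaseI12 SA Rn E) nm C1 E'

/-- Phase I for the semigroup case (no normalization step 2). -/
def IsPhaseISem (SA : Set F) (E : Set (Eqn F (C₀ ⊕ ℕ)))
    (nm : Tm F (C₀ ⊕ ℕ) → (C₀ ⊕ ℕ)) (C1 : Set ℕ) (E' : Set (Eqn F (C₀ ⊕ ℕ))) : Prop :=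
  IsFlattening SA (PhaseI1Sem SA E) nm C1 E'

/- ------------------- Phase II ------------------- -/

/-- The set of constants available after introducing fresh constants
`C2 ⊆ ℕ`: all original constants together with the fresh ones. -/
def SetC (C2 : Set ℕ) : Set (C₀ ⊕ ℕ) :=
  {x | (∃ a : C₀, x = Sum.inl a) ∨ (∃ i ∈ C2, x = Sum.inr i)}

/-- `I(E')` (step 2 of Phase II). -/
def IEset (fG iG : F) (one : γ) (Ei : Set (Eqn F γ)) : Set (Eqn F γ) :=
  {(Tm.app iG [Tm.cst one], Tm.cst one)} ∪
  {e | ∃ m n : γ, (Tm.app iG [Tm.cst m], Tm.cst n) ∈ Ei ∧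
       (e = (Tm.app iG [Tm.cst n], Tm.cst m) ∨
        e = (Tm.app fG [Tm.cst m, Tm.cst n], Tm.cst one) ∨
        e = (Tm.app fG [Tm.cst n, Tm.cst m], Tm.cst one))}

/-- `U(C) = {f(c,1) ≈ c, f(1,c) ≈ c | c ∈ C}`. -/
def UCset (fG : F) (one : γ) (Cs : Set γ) : Set (Eqn F γ) :=
  {e | ∃ c ∈ Cs, e = (Tm.app fG [Tm.cst c, Tm.cst one], Tm.cst c) ∨
                 e = (Tm.app fG [Tm.cst one, Tm.cst c], Tm.cst c)}

/-- Phase II for the group axioms: fresh inverse equations are added for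
the constants lacking them, and `S(E) := E' ∪ I(E') ∪ U(C)`. -/
def IsPhaseIIG (fG iG : F) (one₀ : C₀) (C1 : Set ℕ) (E' : Set (Eqn F (C₀ ⊕ ℕ)))
    (C2 : Set ℕ) (SE : Set (Eqn F (C₀ ⊕ ℕ))) : Prop :=
  C1 ⊆ C2 ∧ C2.Finite ∧
  ∃ Ei : Set (Eqn F (C₀ ⊕ ℕ)), E' ⊆ Ei ∧
    (∀ e ∈ Ei, e ∈ E' ∨ ∃ c ∈ SetC (C₀ := C₀) C2, ∃ m ∈ C2 \ C1,
        e = (Tm.app iG [Tm.cst c], Tm.cst (Sum.inr m))) ∧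
    (∀ c ∈ SetC (C₀ := C₀) C2, c ≠ Sum.inl one₀ →
        ∃ c', (Tm.app iG [Tm.cst c], Tm.cst c') ∈ Ei ∨
              (Tm.app iG [Tm.cst c'], Tm.cst c) ∈ Ei) ∧
    SE = Ei ∪ IEset fG iG (Sum.inl one₀) Ei ∪ UCset fG (Sum.inl one₀) (SetC C2)

/-- Phase II for the monoid axioms: `S(E) := E' ∪ U(C)`. -/
def IsPhaseIIM (fG : F) (one₀ : C₀) (C1 : Set ℕ) (E' SE : Set (Eqn F (C₀ ⊕ ℕ))) : Prop :=
  SE = E' ∪ UCset fG (Sum.inl one₀) (SetC C1)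

/-- Phase II for `n` pairwise disjoint sets of group axioms. -/
def IsPhaseIIMulti (n : ℕ) (fs is_ : Fin n → F) (ones : Fin n → C₀) (C1 : Set ℕ)
    (E' : Set (Eqn F (C₀ ⊕ ℕ))) (C2 : Set ℕ) (SE : Set (Eqn F (C₀ ⊕ ℕ))) : Prop :=
  C1 ⊆ C2 ∧ C2.Finite ∧
  ∃ Ei : Set (Eqn F (C₀ ⊕ ℕ)), E' ⊆ Ei ∧
    (∀ e ∈ Ei, e ∈ E' ∨ ∃ (l : Fin n), ∃ c ∈ SetC (C₀ := C₀) C2, ∃ m ∈ C2 \ C1,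
        e = (Tm.app (is_ l) [Tm.cst c], Tm.cst (Sum.inr m))) ∧
    (∀ (l : Fin n), ∀ c ∈ SetC (C₀ := C₀) C2, c ≠ Sum.inl (ones l) →
        ∃ c', (Tm.app (is_ l) [Tm.cst c], Tm.cst c') ∈ Ei ∨
              (Tm.app (is_ l) [Tm.cst c'], Tm.cst c) ∈ Ei) ∧
    SE = Ei ∪ (⋃ l : Fin n, IEset (fs l) (is_ l) (Sum.inl (ones l)) Ei) ∪
         (⋃ l : Fin n, UCset (fs l) (Sum.inl (ones l)) (SetC C2))

/- -------- Proof complexities and the proof ordering (Def. 3.8) -------- -/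

/-- The complexity of a proof step: a triple of a multiset of terms and two
elements of `Option Tm` (`none` playing the role of `⊥`). -/
abbrev StepCmp (F C₀ : Type) :=
  Multiset (Tm F (C₀ ⊕ ℕ)) × Option (Tm F (C₀ ⊕ ℕ)) × Option (Tm F (C₀ ⊕ ℕ))

/-- Lift of an order to `Option` with `none` (⊥) minimal. -/
def optGT {α : Type*} (r : α → α → Prop) (a b : Option α) : Prop :=
  ∃ x, a = some x ∧ (b = none ∨ ∃ y, b = some y ∧ r x y)

/-- The (Dershowitz–Manna) multiset extension of an order. -/
def MSExt {α : Type*} (r : α → α → Prop) (M N : Multiset α) : Prop :=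
  ∃ M₀ X Y, X ≠ 0 ∧ M = M₀ + X ∧ N = M₀ + Y ∧ ∀ y ∈ Y, ∃ x ∈ X, r x y

/-- Comparison of step complexities: lexicographically, by the multiset
extension of `≻` on the first component and by `≻` (with `⊥` minimal) on
the second and third components. -/
def stepGT (SA : Set F) (prec : C₀ → ℕ) (a b : StepCmp F C₀) : Prop :=
  MSExt (TGT SA prec) a.1 b.1 ∨
  (a.1 = b.1 ∧ (optGT (TGT SA prec) a.2.1 b.2.1 ∨
    (a.2.1 = b.2.1 ∧ optGT (TGT SA prec) a.2.2 b.2.2)))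

/-- `IsProof SA prec S s t M`: there is a proof of `s ≈ t` using equations
of `S` and ground instances of the associativity axioms `gr(A)`, whose
complexity (the multiset of the complexities of its proof steps, per
Definition 3.8) is `M`. -/
inductive IsProof (SA : Set F) (prec : C₀ → ℕ) (S : Set (Eqn F (C₀ ⊕ ℕ))) :
    Tm F (C₀ ⊕ ℕ) → Tm F (C₀ ⊕ ℕ) → Multiset (StepCmp F C₀) → Prop
  | refl : ∀ s, IsProof SA prec S s s 0
  | stepGTc : ∀ {u v s s' t M}, ((u, v) ∈ S ∨ (v, u) ∈ S) → TGT SA prec u v →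
      Repl u v s s' → IsProof SA prec S s' t M →
      IsProof SA prec S s t (({s}, some u, some s') ::ₘ M)
  | stepLTc : ∀ {u v s s' t M}, ((u, v) ∈ S ∨ (v, u) ∈ S) → TGT SA prec v u →
      Repl u v s s' → IsProof SA prec S s' t M →
      IsProof SA prec S s t (({s'}, some v, some s) ::ₘ M)
  | stepEqc : ∀ {u s s' t M}, (u, u) ∈ S →
      Repl u u s s' → IsProof SA prec S s' t M →
      IsProof SA prec S s t (({s, s'}, none, none) ::ₘ M)
  | stepA : ∀ {u v s s' t M}, (ASax SA u v ∨ ASax SA v u) → Ground u →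
      Repl u v s s' → IsProof SA prec S s' t M →
      IsProof SA prec S s t (({s}, none, some s') ::ₘ M)

/- -------- Monoid presentations (Definition 3.17 / Prop. 3.20) -------- -/

/-- `R(E)`: the D-flat and A-flat equations of `S(E) − U(C)` containing the
interpreted associative symbol `fG`. -/
def REset (fG : F) (UC SE : Set (Eqn F γ)) : Set (Eqn F γ) :=
  {e | e ∈ SE \ UC ∧
       ((∃ (u : List γ) (c : γ), 2 ≤ u.length ∧ e = (fS fG u, Tm.cst c)) ∨
        (∃ u v : List γ, 2 ≤ u.length ∧ 2 ≤ v.length ∧ e = (fS fG u, fS fG v)))}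

/-- `C(R)`: the constants appearing in `R(E)`, except the unit. -/
def CRset (one : γ) (RE : Set (Eqn F γ)) : Set γ :=
  {c | c ≠ one ∧ ∃ e ∈ RE, CstIn c e.1 ∨ CstIn c e.2}

/-- The string corresponding to one side of an equation of `R(E)`: the unit
becomes the empty string, any other constant a one-letter string, and a
term `f(u)` the string `u`. -/
def SideStr (fG : F) (one : γ) (t : Tm F γ) (w : List γ) : Prop :=
  (t = Tm.cst one ∧ w = []) ∨ (∃ c, c ≠ one ∧ t = Tm.cst c ∧ w = [c]) ∨
  (∃ u, t = fS fG u ∧ w = u)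

/-- The string relations of the monoid presentation `<C(R) | R(E)>`. -/
def RelOf (fG : F) (one : γ) (RE : Set (Eqn F γ)) : Set (List γ × List γ) :=
  {r | ∃ (u : List γ) (t : Tm F γ) (w : List γ),
        (fS fG u, t) ∈ RE ∧ SideStr fG one t w ∧ r = (u, w)}

/-- The congruence on strings generated by a set of string relations. -/
inductive StrEq (Rel : Set (List γ × List γ)) : List γ → List γ → Prop
  | rel : ∀ {u v} (x y : List γ), (u, v) ∈ Rel → StrEq Rel (x ++ u ++ y) (x ++ v ++ y)
  | refl : ∀ u, StrEq Rel u u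
  | symm : ∀ {u v}, StrEq Rel u v → StrEq Rel v u
  | trans : ∀ {u v w}, StrEq Rel u v → StrEq Rel v w → StrEq Rel u w

/-- The monoid presentation (with generators `X` and string relations `Rel`)
presents a finite group: there are finitely many congruence classes of
strings over `X`, and every string over `X` has a two-sided inverse. -/
def PresentsFiniteGroup (Rel : Set (List γ × List γ)) (X : Set γ) : Prop :=
  (∃ reps : Finset (List γ), ∀ u : List γ, (∀ a ∈ u, a ∈ X) →
      ∃ v ∈ reps, StrEq Rel u v) ∧
  (∀ u : List γ, (∀ a ∈ u, a ∈ X) →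
      ∃ v : List γ, (∀ a ∈ v, a ∈ X) ∧ StrEq Rel (u ++ v) [] ∧ StrEq Rel (v ++ u) [])

/-! ### Preliminaries on terms -/

theorem Tm.ind {P : Tm F γ → Prop} (hv : ∀ n, P (.var n)) (hc : ∀ c, P (.cst c))
    (ha : ∀ f ts, (∀ t ∈ ts, P t) → P (.app f ts)) : ∀ t, P t
  | .var n => hv n
  | .cst c => hc c
  | .app f ts => ha f ts (fun t _ => Tm.ind hv hc ha t)

theorem subst_app (σ : ℕ → Tm F γ) (f : F) (ts : List (Tm F γ)) :
    Tm.subst σ (.app f ts) = .app f (ts.map (Tm.subst σ)) := by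
  rw [Tm.subst]; simp

@[simp] theorem subst_var (σ : ℕ → Tm F γ) (n : ℕ) : Tm.subst σ (.var n) = σ n := by
  rw [Tm.subst]

@[simp] theorem subst_cst (σ : ℕ → Tm F γ) (c : γ) :
    Tm.subst σ (.cst c) = .cst c := by
  rw [Tm.subst]

/-! ### Termination -/

open Classical in
/-- A polynomial interpretation of terms in `ℕ`. An associative symbol is
interpreted by addition, so that the weight does not distinguish terms equal
modulo `A`; a non-associative symbol is interpreted by `2 + ∑ xᵢ²`, which makes
`i(f(x,y))` heavier than `f(i(y),i(x))`. The `max 2` only matters for an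
associative symbol without arguments, and keeps every weight at least `2`. -/
noncomputable def wt (SA : Set F) : Tm F γ → ℕ
  | .var _ => 2
  | .cst _ => 2
  | .app f ts =>
    if f ∈ SA then max 2 (ts.attach.map (fun t => wt SA t.1)).sum
    else 2 + (ts.attach.map (fun t => wt SA t.1 ^ 2)).sum
decreasing_by
  all_goals
    have := List.sizeOf_lt_of_mem t.2
    simp only [Tm.app.sizeOf_spec]
    omega

theorem wt_app_mem {SA : Set F} {f : F} (hf : f ∈ SA) (ts : List (Tm F γ)) :
    wt SA (.app f ts) = max 2 (ts.map (wt SA)).sum := by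
  rw [wt]; simp [hf]

theorem wt_app_not_mem {SA : Set F} {f : F} (hf : f ∉ SA) (ts : List (Tm F γ)) :
    wt SA (.app f ts) = 2 + (ts.map (fun t => wt SA t ^ 2)).sum := by
  rw [wt, if_neg hf]
  congr 2
  conv_rhs => rw [← List.attach_map_subtype_val ts, List.map_map]
  rfl

theorem two_le_wt (SA : Set F) (t : Tm F γ) : 2 ≤ wt SA t := by
  cases t with
  | var n => rw [wt]
  | cst c => rw [wt]
  | app f ts =>
    by_cases hf : f ∈ SA
    · rw [wt_app_mem hf]; exact le_max_left _ _
    · rw [wt_app_not_mem hf]; omega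

theorem wt_ASax {SA : Set F} {s t : Tm F γ} (h : ASax SA s t) : wt SA s = wt SA t := by
  obtain ⟨f, us, ws, vs, hf, hws, -, rfl, rfl⟩ := h
  have h2 : 2 ≤ (ws.map (wt SA)).sum := by
    match ws, hws with
    | w :: ws', _ =>
      have := two_le_wt SA w
      simp only [List.map_cons, List.sum_cons]
      omega
  simp only [wt_app_mem hf, List.map_append, List.map_cons, List.sum_append, List.sum_cons]
  omega

theorem wt_Ctx_eq {SA : Set F} {r : Tm F γ → Tm F γ → Prop}
    (hr : ∀ s t, r s t → wt SA s = wt SA t) {s t : Tm F γ} (h : Ctx r s t) :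
    wt SA s = wt SA t := by
  induction h with
  | base hst => exact hr _ _ hst
  | app f us vs _ ih =>
    by_cases hf : f ∈ SA
    · simp [wt_app_mem hf, ih]
    · simp [wt_app_not_mem hf, ih]

theorem wt_Ctx_lt {SA : Set F} {r : Tm F γ → Tm F γ → Prop}
    (hr : ∀ s t, r s t → wt SA t < wt SA s) {s t : Tm F γ} (h : Ctx r s t) :
    wt SA t < wt SA s := by
  induction h with
  | base hst => exact hr _ _ hst
  | @app s t f us vs _ ih =>
    have h2 := two_le_wt SA t
    by_cases hf : f ∈ SA
    · simp only [wt_app_mem hf, List.map_append, List.map_cons, List.sum_append, List.sum_cons]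
      omega
    · simp only [wt_app_not_mem hf, List.map_append, List.map_cons, List.sum_append,
        List.sum_cons]
      have := Nat.pow_lt_pow_left ih (n := 2) (by norm_num)
      omega

theorem wt_AEq {SA : Set F} {s t : Tm F γ} (h : AEq SA s t) : wt SA s = wt SA t := by
  induction h with
  | refl => rfl
  | tail _ hst ih =>
    rw [ih]
    rcases hst with hst | hst
    · exact wt_Ctx_eq (fun _ _ => wt_ASax) hst
    · exact (wt_Ctx_eq (fun _ _ => wt_ASax) hst).symm

theorem wt_RGrules {SA : Set F} {f i : F} {one : γ} (hf : f ∈ SA) (hi : i ∉ SA)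
    {l r : Tm F γ} (h : (l, r) ∈ RGrules f i one) (σ : ℕ → Tm F γ) :
    wt SA (Tm.subst σ r) < wt SA (Tm.subst σ l) := by
  have h0 := two_le_wt SA (σ 0)
  have h1 := two_le_wt SA (σ 1)
  have hc : wt SA (Tm.cst one : Tm F γ) = 2 := by rw [wt]
  simp only [RGrules, Set.mem_insert_iff, Set.mem_singleton_iff, Prod.mk.injEq] at h
  rcases h with ⟨rfl, rfl⟩ | ⟨rfl, rfl⟩ | ⟨rfl, rfl⟩ | ⟨rfl, rfl⟩ | ⟨rfl, rfl⟩ | ⟨rfl, rfl⟩ |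
      ⟨rfl, rfl⟩ <;>
    simp only [subst_app, subst_var, subst_cst, wt_app_mem hf, wt_app_not_mem hi, hc,
      List.map_cons, List.map_nil, List.sum_cons, List.sum_nil, add_zero]
  · omega
  · omega
  · omega
  · nlinarith [sq_nonneg (2 + wt SA (σ 0) ^ 2)]
  · rw [lt_max_iff]; right; nlinarith
  · rw [lt_max_iff]; right; nlinarith
  · rw [max_eq_right (by nlinarith), max_eq_right (by nlinarith)]
    nlinarith

theorem wt_RewA {SA : Set F} {R : Set (Eqn F γ)}
    (hR : ∀ l r, (l, r) ∈ R → ∀ σ, wt SA (Tm.subst σ r) < wt SA (Tm.subst σ l))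
    {s t : Tm F γ} (h : RewA SA R s t) : wt SA t < wt SA s := by
  obtain ⟨s', t', h1, h2, h3⟩ := h
  rw [wt_AEq h1, ← wt_AEq h3]
  refine wt_Ctx_lt ?_ h2
  rintro _ _ ⟨l, r, σ, hlr, rfl, rfl⟩
  exact hR l r hlr σ

/-! ### Rewriting steps and associativity steps together -/

theorem AEq.symm {SA : Set F} {s t : Tm F γ} (h : AEq SA s t) : AEq SA t s := by
  induction h with
  | refl => exact .refl
  | tail _ hst ih => exact .head hst.symm ih

theorem AEq.app {SA : Set F} {s t : Tm F γ} (f : F) (us vs : List (Tm F γ))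
    (h : AEq SA s t) : AEq SA (.app f (us ++ s :: vs)) (.app f (us ++ t :: vs)) :=
  Relation.ReflTransGen.lift (fun s => Tm.app f (us ++ s :: vs))
    (fun _ _ hst => Or.imp (Ctx.app f us vs) (Ctx.app f us vs) hst) _ _ h

theorem AEq.assoc {SA : Set F} {f : F} (hf : f ∈ SA) (us ws vs : List (Tm F γ))
    (hws : 2 ≤ ws.length) (h : 1 ≤ us.length + vs.length) :
    AEq SA (.app f (us ++ Tm.app f ws :: vs)) (.app f (us ++ ws ++ vs)) :=
  .single (.inl (.base ⟨f, us, ws, vs, hf, hws, h, rfl, rfl⟩))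

/-- One rewrite step with `R` or one associativity step in either direction. -/
def StepRA (SA : Set F) (R : Set (Eqn F γ)) (s t : Tm F γ) : Prop :=
  Ctx (RuleStep R) s t ∨ Ctx (ASax SA) s t ∨ Ctx (ASax SA) t s

/-- Reduction by rewrite steps with `R`, freely interleaved with associativity steps. -/
def RedA (SA : Set F) (R : Set (Eqn F γ)) : Tm F γ → Tm F γ → Prop :=
  Relation.ReflTransGen (StepRA SA R)

theorem AEq.redA {SA : Set F} {s t : Tm F γ} (R : Set (Eqn F γ)) (h : AEq SA s t) :
    RedA SA R s t :=
  Relation.ReflTransGen.mono (fun _ _ hst => Or.inr hst) _ _ h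

theorem RedA.trans {SA : Set F} {R : Set (Eqn F γ)} {s t u : Tm F γ}
    (h : RedA SA R s t) (h' : RedA SA R t u) : RedA SA R s u :=
  Relation.ReflTransGen.trans h h'

theorem RedA.app {SA : Set F} {R : Set (Eqn F γ)} {s t : Tm F γ} (f : F)
    (us vs : List (Tm F γ)) (h : RedA SA R s t) :
    RedA SA R (.app f (us ++ s :: vs)) (.app f (us ++ t :: vs)) :=
  Relation.ReflTransGen.lift (fun s => Tm.app f (us ++ s :: vs))
    (fun _ _ hst => Or.imp (Ctx.app f us vs) (Or.imp (Ctx.app f us vs) (Ctx.app f us vs)) hst)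
    _ _ h

theorem RedA.args {SA : Set F} {R : Set (Eqn F γ)} (f : F) (h : Tm F γ → Tm F γ)
    (ts : List (Tm F γ)) (hts : ∀ t ∈ ts, RedA SA R t (h t)) (us : List (Tm F γ)) :
    RedA SA R (.app f (us ++ ts)) (.app f (us ++ ts.map h)) := by
  induction ts generalizing us with
  | nil => exact .refl
  | cons t ts ih =>
    have h1 := RedA.app f us ts (hts t (by simp))
    have h2 := ih (fun t ht => hts t (by simp [ht])) (us ++ [h t])
    simp only [List.append_assoc, List.cons_append, List.nil_append] at h2
    exact h1.trans h2

theorem AEq.args {SA : Set F} (f : F) (h : Tm F γ → Tm F γ)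
    (ts : List (Tm F γ)) (hts : ∀ t ∈ ts, AEq SA t (h t)) (us : List (Tm F γ)) :
    AEq SA (.app f (us ++ ts)) (.app f (us ++ ts.map h)) := by
  induction ts generalizing us with
  | nil => exact .refl
  | cons t ts ih =>
    have h1 := AEq.app f us ts (hts t (by simp))
    have h2 := ih (fun t ht => hts t (by simp [ht])) (us ++ [h t])
    simp only [List.append_assoc, List.cons_append, List.nil_append] at h2
    exact Relation.ReflTransGen.trans h1 h2

theorem RedA.rule {SA : Set F} {R : Set (Eqn F γ)} {l r : Tm F γ} (h : (l, r) ∈ R)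
    (σ : ℕ → Tm F γ) : RedA SA R (Tm.subst σ l) (Tm.subst σ r) :=
  .single (.inl (.base ⟨l, r, σ, h, rfl, rfl⟩))

/-- Associativity steps that precede a rewrite step are absorbed by `R/A`, so only
those after the last rewrite step remain. -/
theorem RedA.toRewA {SA : Set F} {R : Set (Eqn F γ)} {s t : Tm F γ} (h : RedA SA R s t) :
    ∃ u, Relation.ReflTransGen (RewA SA R) s u ∧ AEq SA u t := by
  induction h with
  | refl => exact ⟨s, .refl, .refl⟩
  | tail _ hst ih =>
    obtain ⟨u, hu, hut⟩ := ih
    rcases hst with hst | hst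
    · exact ⟨_, hu.tail ⟨_, _, hut, hst, .refl⟩, .refl⟩
    · exact ⟨u, hu, hut.tail hst⟩

/-! ### Strings of arguments of an associative symbol -/

/-- The term with argument string `w` under `f`, where a one-letter string stands
for its letter. -/
def joinTm (f : F) : List (Tm F γ) → Tm F γ
  | [x] => x
  | w => .app f w

theorem joinTm_of_two_le (f : F) {w : List (Tm F γ)} (hw : 2 ≤ w.length) :
    joinTm f w = .app f w := by
  match w, hw with
  | _ :: _ :: _, _ => rfl

theorem AEq.join_append {SA : Set F} {f : F} (hf : f ∈ SA) {w w' : List (Tm F γ)}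
    (hw : w ≠ []) (hw' : w' ≠ []) :
    AEq SA (.app f [joinTm f w, joinTm f w']) (joinTm f (w ++ w')) := by
  have key : ∀ (us : List (Tm F γ)) {v : List (Tm F γ)}, us ≠ [] → v ≠ [] →
      AEq SA (.app f (us ++ [joinTm f v])) (.app f (us ++ v)) := by
    intro us v hus hv
    match v, hv with
    | [x], _ => exact .refl
    | x :: y :: v, _ =>
      have h1 : 0 < us.length := List.length_pos_iff.2 hus
      have := AEq.assoc hf us (x :: y :: v) [] (by simp) (by omega)
      simpa [joinTm] using this
  have hlen : 2 ≤ (w ++ w').length := by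
    have h1 : 0 < w.length := List.length_pos_iff.2 hw
    have h2 : 0 < w'.length := List.length_pos_iff.2 hw'
    simp only [List.length_append]; omega
  rw [joinTm_of_two_le f hlen]
  refine Relation.ReflTransGen.trans ?_ (key w hw hw')
  match w, hw with
  | [x], _ => exact .refl
  | x :: y :: v, _ => exact AEq.assoc hf [] (x :: y :: v) [joinTm f w'] (by simp) (by simp)

theorem AEq.join_flatten {SA : Set F} {f : F} (hf : f ∈ SA) (ws : List (List (Tm F γ)))
    (hne : ∀ w ∈ ws, w ≠ []) (hlen : 2 ≤ ws.length) :
    AEq SA (.app f (ws.map (joinTm f))) (joinTm f ws.flatten) := by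
  induction ws with
  | nil => simp at hlen
  | cons w ws ih =>
    match ws, hlen with
    | [w'], _ =>
      simpa using AEq.join_append hf (hne w (by simp)) (hne w' (by simp))
    | w' :: w'' :: ws, _ =>
      have h1 := (AEq.assoc hf [joinTm f w] ((w' :: w'' :: ws).map (joinTm f)) []
        (by simp) (by simp)).symm
      have h2 := AEq.app f [joinTm f w] [] (ih (fun v hv => hne v (by simp [hv])) (by simp))
      have hne' : (w' :: w'' :: ws).flatten ≠ [] := by
        have := hne w' (by simp)
        simp [this]
      have h3 := AEq.join_append hf (hne w (by simp)) hne'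
      simp only [List.append_nil, List.cons_append, List.nil_append] at h1 h2 h3
      exact Relation.ReflTransGen.trans h1 (Relation.ReflTransGen.trans h2 h3)

open Classical in
/-- The string of maximal subterms of a term that are not `f`-applications with at
least two arguments. -/
noncomputable def toL (f : F) : Tm F γ → List (Tm F γ)
  | .var n => [.var n]
  | .cst c => [.cst c]
  | .app g ts =>
    if g = f ∧ 2 ≤ ts.length then (ts.attach.map (fun t => toL f t.1)).flatten
    else [.app g ts]
decreasing_by
  have := List.sizeOf_lt_of_mem t.2
  simp only [Tm.app.sizeOf_spec]
  omega

theorem toL_app (f : F) {ts : List (Tm F γ)} (h : 2 ≤ ts.length) :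
    toL f (.app f ts) = (ts.map (toL f)).flatten := by
  rw [toL]; simp [h]

theorem toL_app_other (f g : F) {ts : List (Tm F γ)} (h : ¬ (g = f ∧ 2 ≤ ts.length)) :
    toL f (.app g ts) = [.app g ts] := by
  rw [toL, if_neg h]

theorem toL_ne_nil (f : F) (t : Tm F γ) : toL f t ≠ [] := by
  induction t using Tm.ind with
  | hv n => simp [toL]
  | hc c => simp [toL]
  | ha g ts ih =>
    by_cases h : g = f ∧ 2 ≤ ts.length
    · obtain ⟨rfl, h⟩ := h
      rw [toL_app g h]
      match ts, h with
      | t :: ts, _ =>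
        have := ih t (by simp)
        simp [this]
    · simp [toL_app_other f g h]

theorem toL_letters (f : F) {P : Tm F γ → Prop}
    (hP : ∀ g ts, P (.app g ts) → ∀ t ∈ ts, P t) (t : Tm F γ) (ht : P t) :
    ∀ x ∈ toL f t, P x ∧ toL f x = [x] := by
  induction t using Tm.ind with
  | hv n => simp [toL, ht]
  | hc c => simp [toL, ht]
  | ha g ts ih =>
    by_cases h : g = f ∧ 2 ≤ ts.length
    · obtain ⟨rfl, h⟩ := h
      rw [toL_app g h]
      intro x hx
      simp only [List.mem_flatten, List.mem_map, exists_exists_and_eq_and] at hx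
      obtain ⟨t, ht', hx⟩ := hx
      exact ih t ht' (hP _ _ ht t ht') x hx
    · simp [toL_app_other f g h, ht]

theorem toL_joinTm (f : F) {w : List (Tm F γ)} (hne : w ≠ []) (hw : ∀ x ∈ w, toL f x = [x]) :
    toL f (joinTm f w) = w := by
  match w, hne with
  | [x], _ => exact hw x (by simp)
  | x :: y :: w, _ =>
    rw [joinTm_of_two_le f (by simp), toL_app f (by simp), List.map_congr_left hw,
      ← List.flatMap_def, List.flatMap_singleton']

/-- Flattening of a term with respect to the single symbol `f`, at the root. -/
noncomputable def normL (f : F) (t : Tm F γ) : Tm F γ := joinTm f (toL f t)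

theorem normL_congr {f : F} {s t : Tm F γ} (h : toL f s = toL f t) : normL f s = normL f t := by
  rw [normL, h, normL]

theorem toL_normL (f : F) (t : Tm F γ) : toL f (normL f t) = toL f t :=
  toL_joinTm f (toL_ne_nil f t)
    fun x hx => (toL_letters f (P := fun _ => True) (by simp) t trivial x hx).2

theorem normL_aeq {SA : Set F} {f : F} (hf : f ∈ SA) (t : Tm F γ) : AEq SA t (normL f t) := by
  induction t using Tm.ind with
  | hv n => rw [normL, toL]; exact .refl
  | hc c => rw [normL, toL]; exact .refl
  | ha g ts ih =>
    by_cases h : g = f ∧ 2 ≤ ts.length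
    · obtain ⟨rfl, h⟩ := h
      rw [normL, toL_app g h]
      have h1 := AEq.args g (normL g) ts ih []
      have h2 := AEq.join_flatten hf (ts.map (toL g))
        (by simp [toL_ne_nil]) (by simpa using h)
      rw [List.map_map] at h2
      exact Relation.ReflTransGen.trans h1 h2
    · rw [normL, toL_app_other f g h]; exact .refl

/-! ### Group words -/

/-- The term of a signed letter: `x` or `i(x)`. -/
def letterTm (i : F) (x : Tm F γ × Bool) : Tm F γ := if x.2 then x.1 else .app i [x.1]

/-- The term of a word in signed letters; the empty word stands for the unit. -/
def build (f i : F) (one : γ) : List (Tm F γ × Bool) → Tm F γ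
  | [] => .cst one
  | x :: w => joinTm f ((x :: w).map (letterTm i))

open Classical in
/-- The value of a term in the free group on terms, when `f`, `i`, `one` are read as
the group operations and every maximal subterm not headed by them as a generator.
Applications of `f` to fewer than two arguments, and of `i` to a number of arguments
other than one, count as generators. -/
noncomputable def toG (f i : F) (one : γ) : Tm F γ → FreeGroup (Tm F γ)
  | .var n => FreeGroup.of (.var n)
  | .cst c => if c = one then 1 else FreeGroup.of (.cst c)
  | .app g ts =>
    if g = f ∧ 2 ≤ ts.length then (ts.attach.map (fun t => toG f i one t.1)).prod
    else if g = i ∧ ts.length = 1 then ((ts.attach.map (fun t => toG f i one t.1)).prod)⁻¹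
    else FreeGroup.of (.app g ts)
decreasing_by
  all_goals
    have := List.sizeOf_lt_of_mem t.2
    simp only [Tm.app.sizeOf_spec]
    omega

open Classical in
/-- The term of the reduced word of a free group element. -/
noncomputable def fromG (f i : F) (one : γ) (g : FreeGroup (Tm F γ)) : Tm F γ :=
  build f i one g.toWord

/-- The normal form of a term with respect to the group `(f, i, one)`, its maximal
subterms not headed by `f`, `i`, `one` being left untouched. -/
noncomputable def normG (f i : F) (one : γ) (t : Tm F γ) : Tm F γ :=
  fromG f i one (toG f i one t)

section Group

variable {f i : F} {one : γ}

theorem toG_app {ts : List (Tm F γ)} (h : 2 ≤ ts.length) :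
    toG f i one (.app f ts) = (ts.map (toG f i one)).prod := by
  rw [toG]; simp [h]

theorem toG_inv (t : Tm F γ) :
    toG f i one (.app i [t]) = (toG f i one t)⁻¹ := by
  rw [toG]; simp

theorem toG_one : toG f i one (.cst one) = 1 := by
  rw [toG]; simp

theorem toG_app_other {g : F} {ts : List (Tm F γ)} (h : ¬ (g = f ∧ 2 ≤ ts.length))
    (h' : ¬ (g = i ∧ ts.length = 1)) :
    toG f i one (.app g ts) = FreeGroup.of (.app g ts) := by
  rw [toG, if_neg h, if_neg h']

open Classical in
theorem prod_letters {S : Tm F γ → Prop} (gs : List (FreeGroup (Tm F γ)))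
    (h : ∀ g ∈ gs, ∀ x ∈ g.toWord, S x.1) : ∀ x ∈ gs.prod.toWord, S x.1 := by
  induction gs with
  | nil => simp
  | cons g gs ih =>
    intro x hx
    rw [List.prod_cons] at hx
    have hx' := (FreeGroup.toWord_mul_sublist g gs.prod).subset hx
    rcases List.mem_append.1 hx' with hx' | hx'
    · exact h g (by simp) x hx'
    · exact ih (fun g hg => h g (by simp [hg])) x hx'

open Classical in
theorem inv_letters {S : Tm F γ → Prop} (g : FreeGroup (Tm F γ))
    (h : ∀ x ∈ g.toWord, S x.1) : ∀ x ∈ (g⁻¹).toWord, S x.1 := by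
  intro x hx
  rw [FreeGroup.toWord_inv, FreeGroup.invRev] at hx
  simp only [List.mem_reverse, List.mem_map] at hx
  obtain ⟨y, hy, rfl⟩ := hx
  exact h y hy

open Classical in
/-- The generators occurring in the value of a term are subterms that evaluate to
themselves; they inherit any property that passes to arguments. -/
theorem toG_letters {P : Tm F γ → Prop}
    (hP : ∀ g ts, P (.app g ts) → ∀ t ∈ ts, P t) (t : Tm F γ) (ht : P t) :
    ∀ x ∈ (toG f i one t).toWord, P x.1 ∧ toG f i one x.1 = FreeGroup.of x.1 := by
  have hof : ∀ t : Tm F γ, P t → toG f i one t = FreeGroup.of t →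
      ∀ x ∈ (toG f i one t).toWord, P x.1 ∧ toG f i one x.1 = FreeGroup.of x.1 := by
    intro t ht h x hx
    rw [h, FreeGroup.toWord_of, List.mem_singleton] at hx
    subst hx
    exact ⟨ht, h⟩
  induction t using Tm.ind with
  | hv n => exact hof _ ht (by rw [toG])
  | hc c =>
    by_cases h : c = one
    · subst h; simp [toG_one]
    · exact hof _ ht (by rw [toG, if_neg h])
  | ha g ts ih =>
    have ih' := fun t h => ih t h (hP _ _ ht t h)
    by_cases h : g = f ∧ 2 ≤ ts.length
    · obtain ⟨rfl, h⟩ := h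
      rw [toG_app h]
      refine prod_letters (S := fun y => P y ∧ toG g i one y = FreeGroup.of y) _ ?_
      intro g' hg'
      obtain ⟨t, ht', rfl⟩ := List.mem_map.1 hg'
      exact ih' t ht'
    · by_cases h' : g = i ∧ ts.length = 1
      · obtain ⟨rfl, h'⟩ := h'
        obtain ⟨t, rfl⟩ := List.length_eq_one_iff.1 h'
        rw [toG_inv]
        exact inv_letters (S := fun y => P y ∧ toG f g one y = FreeGroup.of y) _
          (ih' t (by simp))
      · exact hof _ ht (toG_app_other h h')

theorem toG_letterTm {x : Tm F γ × Bool} (h : toG f i one x.1 = FreeGroup.of x.1) :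
    toG f i one (letterTm i x) = FreeGroup.mk [x] := by
  obtain ⟨a, b⟩ := x
  cases b
  · simp only [letterTm, Bool.false_eq_true, if_false]
    rw [toG_inv, h]
    rfl
  · exact h

theorem toG_build {w : List (Tm F γ × Bool)}
    (h : ∀ x ∈ w, toG f i one x.1 = FreeGroup.of x.1) :
    toG f i one (build f i one w) = FreeGroup.mk w := by
  have hprod : ∀ w : List (Tm F γ × Bool),
      (∀ x ∈ w, toG f i one x.1 = FreeGroup.of x.1) →
      ((w.map (letterTm i)).map (toG f i one)).prod = FreeGroup.mk w := by
    intro w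
    induction w with
    | nil => intro _; rfl
    | cons x w ih =>
      intro h
      simp only [List.map_cons, List.prod_cons]
      rw [toG_letterTm (h x (by simp)), ih (fun y hy => h y (by simp [hy]))]
      simp
  match w with
  | [] => exact toG_one
  | [x] => exact toG_letterTm (h x (by simp))
  | x :: y :: w =>
    rw [build, joinTm_of_two_le f (by simp), toG_app (by simp)]
    exact hprod _ h

theorem normG_congr {s t : Tm F γ} (h : toG f i one s = toG f i one t) :
    normG f i one s = normG f i one t := by
  rw [normG, h, normG]

theorem toG_normG (t : Tm F γ) : toG f i one (normG f i one t) = toG f i one t := by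
  classical
  rw [normG, fromG, toG_build, FreeGroup.mk_toWord]
  exact fun x hx => (toG_letters (P := fun _ => True) (by simp) t trivial x hx).2

theorem normG_of {t : Tm F γ} (h : toG f i one t = FreeGroup.of t) : normG f i one t = t := by
  classical
  rw [normG, h, fromG, FreeGroup.toWord_of]; rfl

theorem normG_one : normG f i one (.cst one) = .cst one := by
  classical
  rw [normG, toG_one, fromG, FreeGroup.toWord_one]; rfl

section Reduction

variable {SA : Set F} {R : Set (Eqn F γ)}

theorem build_append (hf : f ∈ SA) {w w' : List (Tm F γ × Bool)} (hw : w ≠ []) (hw' : w' ≠ []) :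
    AEq SA (.app f [build f i one w, build f i one w']) (build f i one (w ++ w')) := by
  match w, w', hw, hw' with
  | x :: w, y :: w', _, _ =>
    have := AEq.join_append hf (w := (x :: w).map (letterTm i)) (w' := (y :: w').map (letterTm i))
      (by simp) (by simp)
    rw [← List.map_append] at this
    exact this

theorem red_unit_left (hR : RGrules f i one ⊆ R) (x : Tm F γ) :
    RedA SA R (.app f [.cst one, x]) x := by
  have := RedA.rule (SA := SA) (R := R) (l := .app f [.cst one, .var 0]) (r := .var 0)
    (hR (by simp [RGrules])) (fun _ => x)
  simpa [subst_app] using this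

theorem red_unit_right (hR : RGrules f i one ⊆ R) (x : Tm F γ) :
    RedA SA R (.app f [x, .cst one]) x := by
  have := RedA.rule (SA := SA) (R := R) (l := .app f [.var 0, .cst one]) (r := .var 0)
    (hR (by simp [RGrules])) (fun _ => x)
  simpa [subst_app] using this

theorem red_inv_inv (hR : RGrules f i one ⊆ R) (x : Tm F γ) :
    RedA SA R (.app i [.app i [x]]) x := by
  have := RedA.rule (SA := SA) (R := R) (l := .app i [.app i [.var 0]]) (r := .var 0)
    (hR (by simp [RGrules])) (fun _ => x)
  simpa [subst_app] using this

theorem red_inv_one (hR : RGrules f i one ⊆ R) :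
    RedA SA R (.app i [.cst one]) (.cst one) := by
  have := RedA.rule (SA := SA) (R := R) (l := .app i [.cst one]) (r := .cst one)
    (hR (by simp [RGrules])) Tm.var
  simpa [subst_app] using this

theorem red_mul_inv (hR : RGrules f i one ⊆ R) (x : Tm F γ) :
    RedA SA R (.app f [x, .app i [x]]) (.cst one) := by
  have := RedA.rule (SA := SA) (R := R) (l := .app f [.var 0, .app i [.var 0]]) (r := .cst one)
    (hR (by simp [RGrules])) (fun _ => x)
  simpa [subst_app] using this

theorem red_inv_mul (hR : RGrules f i one ⊆ R) (x : Tm F γ) :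
    RedA SA R (.app f [.app i [x], x]) (.cst one) := by
  have := RedA.rule (SA := SA) (R := R) (l := .app f [.app i [.var 0], .var 0]) (r := .cst one)
    (hR (by simp [RGrules])) (fun _ => x)
  simpa [subst_app] using this

theorem red_inv_app (hR : RGrules f i one ⊆ R) (x y : Tm F γ) :
    RedA SA R (.app i [.app f [x, y]]) (.app f [.app i [y], .app i [x]]) := by
  have := RedA.rule (SA := SA) (R := R) (l := .app i [.app f [.var 0, .var 1]])
    (r := .app f [.app i [.var 1], .app i [.var 0]])
    (hR (by simp [RGrules])) (fun n => if n = 0 then x else y)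
  simpa [subst_app] using this

theorem red_build_append (hf : f ∈ SA) (hR : RGrules f i one ⊆ R) (w w' : List (Tm F γ × Bool)) :
    RedA SA R (.app f [build f i one w, build f i one w']) (build f i one (w ++ w')) := by
  rcases eq_or_ne w [] with rfl | hw
  · exact red_unit_left hR _
  rcases eq_or_ne w' [] with rfl | hw'
  · rw [List.append_nil]; exact red_unit_right hR _
  exact (build_append hf hw hw').redA R

theorem red_build_cancel (hf : f ∈ SA) (hR : RGrules f i one ⊆ R)
    (a : Tm F γ) (b : Bool) (L₁ L₂ : List (Tm F γ × Bool)) :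
    RedA SA R (build f i one (L₁ ++ (a, b) :: (a, !b) :: L₂)) (build f i one (L₁ ++ L₂)) := by
  induction L₁ with
  | nil =>
    have h0 : RedA SA R (build f i one [(a, b), (a, !b)]) (.cst one) := by
      cases b
      · exact red_inv_mul hR a
      · exact red_mul_inv hR a
    rcases eq_or_ne L₂ [] with rfl | h
    · exact h0
    · have h1 := ((build_append (one := one) (i := i) hf (w := [(a, b), (a, !b)])
        (by simp) h).symm).redA R
      have h2 := RedA.app f [] [build f i one L₂] h0
      exact (h1.trans h2).trans (red_unit_left hR _)
  | cons x L₁ ih =>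
    have h1 := ((build_append (one := one) (i := i) hf (w := [x])
      (w' := L₁ ++ (a, b) :: (a, !b) :: L₂) (by simp) (by simp)).symm).redA R
    have h2 := RedA.app f [build f i one [x]] [] ih
    exact (h1.trans h2).trans (red_build_append hf hR [x] (L₁ ++ L₂))

open Classical in
theorem red_build_reduce (hf : f ∈ SA) (hR : RGrules f i one ⊆ R) (w : List (Tm F γ × Bool)) :
    RedA SA R (build f i one w) (build f i one (FreeGroup.reduce w)) := by
  have h : Relation.ReflTransGen FreeGroup.Red.Step w (FreeGroup.reduce w) :=
    FreeGroup.reduce.red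
  generalize FreeGroup.reduce w = w' at h ⊢
  induction h with
  | refl => exact .refl
  | tail _ hst ih =>
    refine ih.trans ?_
    cases hst with
    | not => exact red_build_cancel hf hR _ _ _ _

theorem red_fromG_mul (hf : f ∈ SA) (hR : RGrules f i one ⊆ R) (g h : FreeGroup (Tm F γ)) :
    RedA SA R (.app f [fromG f i one g, fromG f i one h]) (fromG f i one (g * h)) := by
  classical
  unfold fromG
  rw [FreeGroup.toWord_mul]
  exact (red_build_append hf hR _ _).trans (red_build_reduce hf hR _)

theorem red_fromG_prod (hf : f ∈ SA) (hR : RGrules f i one ⊆ R)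
    (gs : List (FreeGroup (Tm F γ))) (hlen : 2 ≤ gs.length) :
    RedA SA R (.app f (gs.map (fromG f i one))) (fromG f i one gs.prod) := by
  induction gs with
  | nil => simp at hlen
  | cons g gs ih =>
    match gs, hlen with
    | [h], _ => simpa using red_fromG_mul hf hR g h
    | h :: k :: gs, _ =>
      have h1 := ((AEq.assoc hf [fromG f i one g] ((h :: k :: gs).map (fromG f i one)) []
        (by simp) (by simp)).symm).redA R
      have h2 := RedA.app f [fromG f i one g] [] (ih (by simp))
      have h3 := red_fromG_mul hf hR g (h :: k :: gs).prod
      simp only [List.append_nil, List.cons_append, List.nil_append] at h1 h2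
      rw [List.prod_cons]
      exact (h1.trans h2).trans h3

theorem red_build_inv (hf : f ∈ SA) (hR : RGrules f i one ⊆ R) (w : List (Tm F γ × Bool)) :
    RedA SA R (.app i [build f i one w]) (build f i one (FreeGroup.invRev w)) := by
  induction w with
  | nil => exact red_inv_one hR
  | cons x w ih =>
    have hx : RedA SA R (.app i [build f i one [x]]) (build f i one [(x.1, !x.2)]) := by
      obtain ⟨a, b⟩ := x
      cases b
      · exact red_inv_inv hR a
      · exact .refl
    have hrev : FreeGroup.invRev (x :: w) = FreeGroup.invRev w ++ [(x.1, !x.2)] := by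
      simp [FreeGroup.invRev]
    rw [hrev]
    rcases eq_or_ne w [] with rfl | hw
    · exact hx
    have h1 := RedA.app i [] [] (((build_append (one := one) (i := i) hf (w := [x])
      (w' := w) (by simp) hw).symm).redA R)
    have h2 := red_inv_app (SA := SA) hR (build f i one [x]) (build f i one w)
    have h3 := RedA.app f [] [.app i [build f i one [x]]] ih
    have h4 := RedA.app f [build f i one (FreeGroup.invRev w)] [] hx
    exact (((h1.trans h2).trans h3).trans h4).trans (red_build_append hf hR _ _)

theorem red_normG (hf : f ∈ SA) (hR : RGrules f i one ⊆ R) (t : Tm F γ) :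
    RedA SA R t (normG f i one t) := by
  classical
  have hof : ∀ t : Tm F γ, toG f i one t = FreeGroup.of t → RedA SA R t (normG f i one t) := by
    intro t ht
    rw [normG_of ht]; exact .refl
  induction t using Tm.ind with
  | hv n => exact hof _ (by rw [toG])
  | hc c =>
    by_cases h : c = one
    · subst h
      rw [normG_one]
      exact .refl
    · exact hof _ (by rw [toG, if_neg h])
  | ha g ts ih =>
    by_cases h : g = f ∧ 2 ≤ ts.length
    · obtain ⟨rfl, h⟩ := h
      have h1 := RedA.args g (normG g i one) ts ih []
      have h2 := red_fromG_prod hf hR (ts.map (toG g i one)) (by simpa using h)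
      rw [List.map_map] at h2
      rw [normG, toG_app h]
      exact RedA.trans h1 h2
    · by_cases h' : g = i ∧ ts.length = 1
      · obtain ⟨rfl, h'⟩ := h'
        obtain ⟨t, rfl⟩ := List.length_eq_one_iff.1 h'
        have h1 := RedA.app g [] [] (ih t (by simp))
        rw [normG, toG_inv, fromG, FreeGroup.toWord_inv]
        exact RedA.trans h1 (red_build_inv hf hR _)
      · exact hof _ (toG_app_other h h')

end Reduction

end Group

/-! ### Normal forms for the union of the group systems -/

section Multi

variable {n : ℕ}

open Classical in
/-- The normal form of `f(us)` for arguments `us` that are already in normal form. -/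
noncomputable def op (SA : Set F) (fs is_ : Fin n → F) (ones : Fin n → γ)
    (f : F) (us : List (Tm F γ)) : Tm F γ :=
  if h : ∃ l, (f = fs l ∧ 2 ≤ us.length) ∨ (f = is_ l ∧ us.length = 1) then
    normG (fs h.choose) (is_ h.choose) (ones h.choose) (.app f us)
  else if f ∈ SA ∧ 2 ≤ us.length then normL f (.app f us)
  else .app f us

/-- The normal form of a term, computed from the innermost subterms outwards. -/
noncomputable def nf (SA : Set F) (fs is_ : Fin n → F) (ones : Fin n → γ) : Tm F γ → Tm F γ
  | .var k => .var k
  | .cst c => .cst c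
  | .app f ts => op SA fs is_ ones f (ts.attach.map (fun t => nf SA fs is_ ones t.1))
decreasing_by
  have := List.sizeOf_lt_of_mem t.2
  simp only [Tm.app.sizeOf_spec]
  omega

/-- Terms in normal form: `op` changes none of their subterms. -/
inductive Good (SA : Set F) (fs is_ : Fin n → F) (ones : Fin n → γ) : Tm F γ → Prop
  | var : ∀ k, Good SA fs is_ ones (.var k)
  | cst : ∀ c, Good SA fs is_ ones (.cst c)
  | app : ∀ f us, (∀ u ∈ us, Good SA fs is_ ones u) →
      op SA fs is_ ones f us = .app f us → Good SA fs is_ ones (.app f us)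

/-- Pairwise disjointness of the function symbols of the groups. -/
structure Disj (fs is_ : Fin n → F) : Prop where
  fs_inj : ∀ l m, fs l = fs m → l = m
  is_inj : ∀ l m, is_ l = is_ m → l = m
  ne : ∀ l m, fs l ≠ is_ m

variable {SA : Set F} {fs is_ : Fin n → F} {ones : Fin n → γ}

theorem nf_app (f : F) (ts : List (Tm F γ)) :
    nf SA fs is_ ones (.app f ts) = op SA fs is_ ones f (ts.map (nf SA fs is_ ones)) := by
  rw [nf]; simp

theorem nf_cst (c : γ) : nf SA fs is_ ones (.cst c) = .cst c := by rw [nf]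

theorem Good.args {g : F} {ts : List (Tm F γ)} (h : Good SA fs is_ ones (.app g ts)) :
    ∀ t ∈ ts, Good SA fs is_ ones t := by
  cases h with
  | app _ _ h _ => exact h

theorem op_group (hd : Disj fs is_) (l : Fin n) {f : F} {us : List (Tm F γ)}
    (h : (f = fs l ∧ 2 ≤ us.length) ∨ (f = is_ l ∧ us.length = 1)) :
    op SA fs is_ ones f us = normG (fs l) (is_ l) (ones l) (.app f us) := by
  have hex : ∃ l, (f = fs l ∧ 2 ≤ us.length) ∨ (f = is_ l ∧ us.length = 1) := ⟨l, h⟩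
  have hl : hex.choose = l := by
    rcases h with ⟨h, _⟩ | ⟨h, _⟩ <;> rcases hex.choose_spec with ⟨h', _⟩ | ⟨h', _⟩
    · exact hd.fs_inj _ _ (h'.symm.trans h)
    · exact absurd (h.symm.trans h') (hd.ne _ _)
    · exact absurd (h'.symm.trans h) (hd.ne _ _)
    · exact hd.is_inj _ _ (h'.symm.trans h)
  rw [op, dif_pos hex, hl]

theorem op_fs (hd : Disj fs is_) (l : Fin n) {us : List (Tm F γ)} (h : 2 ≤ us.length) :
    op SA fs is_ ones (fs l) us = normG (fs l) (is_ l) (ones l) (.app (fs l) us) :=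
  op_group hd l (.inl ⟨rfl, h⟩)

theorem op_is (hd : Disj fs is_) (l : Fin n) (u : Tm F γ) :
    op SA fs is_ ones (is_ l) [u] = normG (fs l) (is_ l) (ones l) (.app (is_ l) [u]) :=
  op_group hd l (.inr ⟨rfl, rfl⟩)

theorem Good.normG_eq (hd : Disj fs is_) {t : Tm F γ} (ht : Good SA fs is_ ones t) (l : Fin n) :
    normG (fs l) (is_ l) (ones l) t = t := by
  cases ht with
  | var k => exact normG_of (by rw [toG])
  | cst c =>
    by_cases h : c = ones l
    · subst h
      exact normG_one
    · exact normG_of (by rw [toG, if_neg h])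
  | app f us hus hop =>
    by_cases h : (f = fs l ∧ 2 ≤ us.length) ∨ (f = is_ l ∧ us.length = 1)
    · rw [op_group hd l h] at hop
      exact hop
    · rw [not_or] at h
      exact normG_of (toG_app_other h.1 h.2)

theorem good_letterTm (hd : Disj fs is_) (l : Fin n) {x : Tm F γ × Bool}
    (hg : Good SA fs is_ ones x.1)
    (hx : toG (fs l) (is_ l) (ones l) x.1 = FreeGroup.of x.1) :
    Good SA fs is_ ones (letterTm (is_ l) x) := by
  classical
  obtain ⟨a, b⟩ := x
  cases b
  · refine .app _ _ (by simpa using hg) ?_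
    rw [op_is hd, normG, toG_inv, hx, fromG, FreeGroup.toWord_inv, FreeGroup.toWord_of]
    rfl
  · exact hg

theorem good_normG (hd : Disj fs is_) (l : Fin n) {t : Tm F γ}
    (h : (∃ us, t = .app (fs l) us ∧ 2 ≤ us.length ∧ ∀ u ∈ us, Good SA fs is_ ones u) ∨
      ∃ u, t = .app (is_ l) [u] ∧ Good SA fs is_ ones u) :
    Good SA fs is_ ones (normG (fs l) (is_ l) (ones l) t) := by
  classical
  have hlet : ∀ x ∈ (toG (fs l) (is_ l) (ones l) t).toWord,
      Good SA fs is_ ones x.1 ∧ toG (fs l) (is_ l) (ones l) x.1 = FreeGroup.of x.1 := by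
    rcases h with ⟨us, rfl, hlen, hus⟩ | ⟨u, rfl, hu⟩
    · rw [toG_app hlen]
      refine prod_letters (S := fun y => Good SA fs is_ ones y ∧
        toG (fs l) (is_ l) (ones l) y = FreeGroup.of y) _ ?_
      intro g hg
      obtain ⟨u, hu, rfl⟩ := List.mem_map.1 hg
      exact toG_letters (fun _ _ h => h.args) u (hus u hu)
    · rw [toG_inv]
      exact inv_letters (S := fun y => Good SA fs is_ ones y ∧
        toG (fs l) (is_ l) (ones l) y = FreeGroup.of y) _
        (toG_letters (fun _ _ h => h.args) u hu)
  have hidem : normG (fs l) (is_ l) (ones l) (normG (fs l) (is_ l) (ones l) t) =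
      normG (fs l) (is_ l) (ones l) t := by
    conv_lhs => rw [normG, toG_normG]
    rfl
  generalize hw : (toG (fs l) (is_ l) (ones l) t).toWord = w at hlet
  have hb : normG (fs l) (is_ l) (ones l) t = build (fs l) (is_ l) (ones l) w := by
    rw [normG, fromG, ← hw]
  rw [hb] at hidem ⊢
  clear hw hb
  match w with
  | [] => exact .cst _
  | [x] => exact good_letterTm hd l (hlet x (by simp)).1 (hlet x (by simp)).2
  | x :: y :: w =>
    rw [build, joinTm_of_two_le _ (by simp)] at hidem ⊢
    refine .app _ _ ?_ ?_
    · intro u hu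
      obtain ⟨z, hz, rfl⟩ := List.mem_map.1 hu
      exact good_letterTm hd l (hlet z hz).1 (hlet z hz).2
    · rw [op_fs hd l (by simp)]
      exact hidem

theorem good_op (hd : Disj fs is_) (f : F) (us : List (Tm F γ))
    (hus : ∀ u ∈ us, Good SA fs is_ ones u) : Good SA fs is_ ones (op SA fs is_ ones f us) := by
  by_cases h : ∃ l, (f = fs l ∧ 2 ≤ us.length) ∨ (f = is_ l ∧ us.length = 1)
  · obtain ⟨l, h⟩ := h
    rw [op_group hd l h]
    refine good_normG hd l ?_
    rcases h with ⟨rfl, h⟩ | ⟨rfl, h⟩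
    · exact .inl ⟨us, rfl, h, hus⟩
    · obtain ⟨u, rfl⟩ := List.length_eq_one_iff.1 h
      exact .inr ⟨u, rfl, hus u (by simp)⟩
  by_cases h' : f ∈ SA ∧ 2 ≤ us.length
  · have hop : op SA fs is_ ones f us = normL f (.app f us) := by
      rw [op, dif_neg h, if_pos h']
    have hlet : ∀ x ∈ toL f (.app f us), Good SA fs is_ ones x := by
      rw [toL_app f h'.2]
      intro x hx
      simp only [List.mem_flatten, List.mem_map, exists_exists_and_eq_and] at hx
      obtain ⟨u, hu, hx⟩ := hx
      exact (toL_letters f (fun _ _ h => h.args) u (hus u hu) x hx).1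
    have hidem : normL f (normL f (.app f us)) = normL f (.app f us) := by
      conv_lhs => rw [normL, toL_normL]
      rfl
    have hne := toL_ne_nil f (.app f us)
    rw [hop]
    generalize hw : toL f (.app f us) = w at hlet hne
    have hb : normL f (.app f us) = joinTm f w := by rw [normL, hw]
    rw [hb] at hidem ⊢
    clear hw hb hop
    match w, hne with
    | [x], _ => exact hlet x (by simp)
    | x :: y :: w, _ =>
      rw [joinTm_of_two_le _ (by simp)] at hidem ⊢
      refine .app _ _ hlet ?_
      have hno : ¬ ∃ l, (f = fs l ∧ 2 ≤ (x :: y :: w).length) ∨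
          (f = is_ l ∧ (x :: y :: w).length = 1) := by
        rintro ⟨l, ⟨h1, -⟩ | ⟨-, h1⟩⟩
        · exact h ⟨l, .inl ⟨h1, h'.2⟩⟩
        · simp at h1
      rw [op, dif_neg hno, if_pos ⟨h'.1, by simp⟩]
      exact hidem
  · have hop : op SA fs is_ ones f us = .app f us := by
      rw [op, dif_neg h, if_neg h']
    rw [hop]
    exact .app f us hus hop

theorem good_nf (hd : Disj fs is_) (t : Tm F γ) : Good SA fs is_ ones (nf SA fs is_ ones t) := by
  induction t using Tm.ind with
  | hv k => rw [nf]; exact .var k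
  | hc c => rw [nf]; exact .cst c
  | ha f ts ih =>
    rw [nf_app]
    exact good_op hd f _ (by simpa using ih)

/-! ### Invariance of the normal form -/

theorem op_assoc (hd : Disj fs is_) {f : F} (hf : f ∈ SA) (his : ∀ l, is_ l ∉ SA)
    (us ws vs : List (Tm F γ)) (hws : 2 ≤ ws.length) (h : 1 ≤ us.length + vs.length) :
    op SA fs is_ ones f (us ++ op SA fs is_ ones f ws :: vs) =
      op SA fs is_ ones f (us ++ ws ++ vs) := by
  have hl1 : ∀ x : Tm F γ, 2 ≤ (us ++ x :: vs).length := by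
    intro x; simp only [List.length_append, List.length_cons]; omega
  have hl2 : 2 ≤ (us ++ ws ++ vs).length := by
    simp only [List.length_append]; omega
  by_cases hex : ∃ l, f = fs l
  · obtain ⟨l, rfl⟩ := hex
    rw [op_fs hd l (hl1 _), op_fs hd l hl2, op_fs hd l hws]
    refine normG_congr ?_
    rw [toG_app (hl1 _), toG_app hl2]
    simp [toG_normG, toG_app hws]
  · have hno : ∀ us : List (Tm F γ),
        ¬ ∃ l, (f = fs l ∧ 2 ≤ us.length) ∨ (f = is_ l ∧ us.length = 1) := by
      rintro us ⟨l, ⟨h1, -⟩ | ⟨h1, -⟩⟩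
      · exact hex ⟨l, h1⟩
      · exact his l (h1 ▸ hf)
    have hop : ∀ us : List (Tm F γ), 2 ≤ us.length →
        op SA fs is_ ones f us = normL f (.app f us) := by
      intro us hus
      rw [op, dif_neg (hno us), if_pos ⟨hf, hus⟩]
    rw [hop _ (hl1 _), hop _ hl2, hop _ hws]
    refine normL_congr ?_
    rw [toL_app f (hl1 _), toL_app f hl2]
    simp [toL_normL, toL_app f hws]

theorem nf_ASax (hd : Disj fs is_) (his : ∀ l, is_ l ∉ SA) {s t : Tm F γ} (h : ASax SA s t) :
    nf SA fs is_ ones s = nf SA fs is_ ones t := by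
  obtain ⟨f, us, ws, vs, hf, hws, hlen, rfl, rfl⟩ := h
  simp only [nf_app, List.map_append, List.map_cons]
  exact op_assoc hd hf his _ _ _ (by simpa using hws) (by simpa using hlen)

/-- The rules hold in every group, and normal forms are fixed by `normG`. -/
theorem nf_RuleStep (hd : Disj fs is_) {s t : Tm F γ}
    (h : RuleStep (⋃ l : Fin n, RGrules (fs l) (is_ l) (ones l)) s t) :
    nf SA fs is_ ones s = nf SA fs is_ ones t := by
  obtain ⟨p, q, σ, hpq, rfl, rfl⟩ := h
  obtain ⟨l, hl⟩ := Set.mem_iUnion.1 hpq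
  have hx : ∀ k, normG (fs l) (is_ l) (ones l) (nf SA fs is_ ones (σ k)) =
      nf SA fs is_ ones (σ k) := fun k => (good_nf hd (σ k)).normG_eq hd l
  have h1 : normG (fs l) (is_ l) (ones l) (.cst (ones l)) = .cst (ones l) := normG_one
  have hop2 : ∀ x y : Tm F γ, op SA fs is_ ones (fs l) [x, y] =
      normG (fs l) (is_ l) (ones l) (.app (fs l) [x, y]) := fun x y => op_fs hd l (by simp)
  have hmul : ∀ x y : Tm F γ, toG (fs l) (is_ l) (ones l) (.app (fs l) [x, y]) =
      toG (fs l) (is_ l) (ones l) x * toG (fs l) (is_ l) (ones l) y := by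
    intro x y; rw [toG_app (by simp)]; simp
  have key : ∀ a b : Tm F γ, normG (fs l) (is_ l) (ones l) b = b →
      toG (fs l) (is_ l) (ones l) a = toG (fs l) (is_ l) (ones l) b →
      normG (fs l) (is_ l) (ones l) a = b := by
    intro a b hb hab
    rw [← hb, normG, hab, ← normG]
  simp only [RGrules, Set.mem_insert_iff, Set.mem_singleton_iff, Prod.mk.injEq] at hl
  rcases hl with ⟨rfl, rfl⟩ | ⟨rfl, rfl⟩ | ⟨rfl, rfl⟩ | ⟨rfl, rfl⟩ | ⟨rfl, rfl⟩ | ⟨rfl, rfl⟩ |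
      ⟨rfl, rfl⟩ <;>
    simp only [subst_app, subst_var, subst_cst, nf_app, nf_cst, List.map_cons, List.map_nil,
      op_is hd, hop2]
  · exact key _ _ h1 (by simp [toG_inv, toG_one])
  · exact key _ _ (hx 0) (by simp [hmul, toG_one])
  · exact key _ _ (hx 0) (by simp [hmul, toG_one])
  · exact key _ _ (hx 0) (by simp [toG_inv, toG_normG])
  · exact key _ _ h1 (by simp [hmul, toG_inv, toG_normG, toG_one])
  · exact key _ _ h1 (by simp [hmul, toG_inv, toG_normG, toG_one])
  · refine normG_congr ?_
    simp [hmul, toG_inv, toG_normG]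

theorem nf_Ctx {r : Tm F γ → Tm F γ → Prop}
    (hr : ∀ s t, r s t → nf SA fs is_ ones s = nf SA fs is_ ones t)
    {s t : Tm F γ} (h : Ctx r s t) : nf SA fs is_ ones s = nf SA fs is_ ones t := by
  induction h with
  | base hst => exact hr _ _ hst
  | app f us vs _ ih => simp [nf_app, ih]

theorem nf_AEq (hd : Disj fs is_) (his : ∀ l, is_ l ∉ SA) {s t : Tm F γ} (h : AEq SA s t) :
    nf SA fs is_ ones s = nf SA fs is_ ones t := by
  induction h with
  | refl => rfl
  | tail _ hst ih =>
    rw [ih]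
    rcases hst with hst | hst
    · exact nf_Ctx (fun _ _ => nf_ASax hd his) hst
    · exact (nf_Ctx (fun _ _ => nf_ASax hd his) hst).symm

theorem nf_RewA (hd : Disj fs is_) (his : ∀ l, is_ l ∉ SA) {s t : Tm F γ}
    (h : Relation.ReflTransGen
      (RewA SA (⋃ l : Fin n, RGrules (fs l) (is_ l) (ones l))) s t) :
    nf SA fs is_ ones s = nf SA fs is_ ones t := by
  induction h with
  | refl => rfl
  | tail _ hst ih =>
    obtain ⟨s', t', h1, h2, h3⟩ := hst
    rw [ih, nf_AEq hd his h1, ← nf_AEq hd his h3]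
    exact nf_Ctx (fun _ _ => nf_RuleStep hd) h2

/-! ### Reduction to the normal form -/

theorem red_op (hd : Disj fs is_) (hfs : ∀ l, fs l ∈ SA) (f : F) (us : List (Tm F γ)) :
    RedA SA (⋃ l : Fin n, RGrules (fs l) (is_ l) (ones l)) (.app f us)
      (op SA fs is_ ones f us) := by
  by_cases h : ∃ l, (f = fs l ∧ 2 ≤ us.length) ∨ (f = is_ l ∧ us.length = 1)
  · obtain ⟨l, h⟩ := h
    rw [op_group hd l h]
    exact red_normG (hfs l) (Set.subset_iUnion (fun l => RGrules (fs l) (is_ l) (ones l)) l) _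
  by_cases h' : f ∈ SA ∧ 2 ≤ us.length
  · rw [op, dif_neg h, if_pos h']
    exact (normL_aeq h'.1 _).redA _
  · rw [op, dif_neg h, if_neg h']
    exact .refl

theorem red_nf (hd : Disj fs is_) (hfs : ∀ l, fs l ∈ SA) (t : Tm F γ) :
    RedA SA (⋃ l : Fin n, RGrules (fs l) (is_ l) (ones l)) t (nf SA fs is_ ones t) := by
  induction t using Tm.ind with
  | hv k => rw [nf]; exact .refl
  | hc c => rw [nf]; exact .refl
  | ha f ts ih =>
    rw [nf_app]
    exact (RedA.args f _ ts ih []).trans (red_op hd hfs f _)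

end Multi

/-- Lemma 4.7: the union `⊎_{i=1}^n R(G_i)` of the rewrite systems of `n`
pairwise symbol-disjoint sets of group axioms is convergent modulo `A`:
terminating and confluent on associatively flat terms. -/
theorem multi_RG_convergent_modulo_A
    {F γ : Type} [Finite F] (SA : Set F)
    (n : ℕ) (fs is_ : Fin n → F) (ones : Fin n → γ)
    (hfs : ∀ l, fs l ∈ SA) (his : ∀ l, is_ l ∉ SA)
    (hfi : ∀ l m, fs l ≠ is_ m)
    (hdisj : ∀ l m, l ≠ m → fs l ≠ fs m ∧ is_ l ≠ is_ m ∧ ones l ≠ ones m) :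
    TerminatingOn (RewA SA (⋃ l : Fin n, RGrules (fs l) (is_ l) (ones l))) (Flat SA) ∧
    ConfluentModAOn SA (⋃ l : Fin n, RGrules (fs l) (is_ l) (ones l)) (Flat SA) := by
  refine ⟨?_, ?_⟩
  · rintro ⟨g, -, hg⟩
    have hlt : ∀ k, wt SA (g (k + 1)) < wt SA (g k) := by
      intro k
      refine wt_RewA ?_ (hg k)
      intro p q hpq σ
      obtain ⟨l, hl⟩ := Set.mem_iUnion.1 hpq
      exact wt_RGrules (hfs l) (his l) hl σ
    exact not_strictAnti_of_wellFoundedLT _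
      (strictAnti_nat_of_succ_lt (f := fun k => wt SA (g k)) hlt)
  · have hd : Disj fs is_ :=
      ⟨fun l m h => by_contra fun hlm => (hdisj l m hlm).1 h,
        fun l m h => by_contra fun hlm => (hdisj l m hlm).2.1 h, hfi⟩
    intro a b c _ _ _ hab hac
    obtain ⟨u, hu, hu'⟩ := (red_nf (ones := ones) hd hfs b).toRewA
    obtain ⟨v, hv, hv'⟩ := (red_nf (ones := ones) hd hfs c).toRewA
    refine ⟨u, v, hu, hv, ?_⟩
    -- `b` and `c` share the normal form of `a`.
    rw [← nf_RewA hd his hab, nf_RewA hd his hac] at hu'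
    exact Relation.ReflTransGen.trans hu' hv'.symm

end CCModG
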